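/- The set of bad shifts is recursive uniformly in B: there is an algorithm which, given a finite set B of terms in CQ normal form and a shift S, decides whether S is bad for B. -/

import Mathlib

/-- Terms of the free (quasi-)Cartesian monoid: constants `I, L, R`,
composition `comp` (written `*` in the paper) and pairing `pair`. -/
inductive Term : Type
  | I : Term
  | L : Term
  | R : Term
  | comp : Term → Term → Term
  | pair : Term → Term → Term
  deriving DecidableEq

open Term

/-- The rewrite rules (1)-(7), indexed by their number. -/
inductive Rule : ℕ → Term → Term → Prop
  | r1 (x y : Term) : Rule 1 (comp L (pair x y)) x
  | r2 (x y : Term) : Rule 2 (comp R (pair x y)) y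
  | r3 (x y z : Term) : Rule 3 (comp (pair x y) z) (pair (comp x z) (comp y z))
  | r4 (x : Term) : Rule 4 (comp I x) x
  | r5 (x : Term) : Rule 5 (comp x I) x
  | r6 (x : Term) : Rule 6 (pair (comp L x) (comp R x)) x
  | r7 : Rule 7 (pair L R) I

/-- The congruence generated by associativity of `comp`. -/
inductive AssocEq : Term → Term → Prop
  | assoc (a b c : Term) : AssocEq (comp (comp a b) c) (comp a (comp b c))
  | refl (a : Term) : AssocEq a a
  | symm {a b : Term} : AssocEq a b → AssocEq b a
  | trans {a b c : Term} : AssocEq a b → AssocEq b c → AssocEq a c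
  | comp_congr {a a' b b' : Term} :
      AssocEq a a' → AssocEq b b' → AssocEq (comp a b) (comp a' b')
  | pair_congr {a a' b b' : Term} :
      AssocEq a a' → AssocEq b b' → AssocEq (pair a b) (pair a' b')

/-- One-step rewriting by a rule whose index lies in `J`,
closed under replacement of subterms (monotone closure). -/
inductive Step (J : Set ℕ) : Term → Term → Prop
  | rule {n : ℕ} {x y : Term} : n ∈ J → Rule n x y → Step J x y
  | comp_left {a a' b : Term} : Step J a a' → Step J (comp a b) (comp a' b)
  | comp_right {a b b' : Term} : Step J b b' → Step J (comp a b) (comp a b')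
  | pair_left {a a' b : Term} : Step J a a' → Step J (pair a b) (pair a' b)
  | pair_right {a b b' : Term} : Step J b b' → Step J (pair a b) (pair a b')

/-- One-step rewriting modulo associativity. -/
def StepA (J : Set ℕ) (a b : Term) : Prop :=
  ∃ a' b', AssocEq a a' ∧ Step J a' b' ∧ AssocEq b' b

/-- Many-step rewriting `↠_J`: the monotone reflexive transitive closure of
one-step rewriting by the rules in `J`, modulo associativity. -/
def Red (J : Set ℕ) (a b : Term) : Prop :=
  ∃ c, Relation.ReflTransGen (StepA J) a c ∧ AssocEq c b

/-- `a` is in normal form w.r.t. the rules in `J` (modulo associativity). -/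
def NF (J : Set ℕ) (a : Term) : Prop := ∀ b, ¬ StepA J a b

/-- Rules (1)-(7). -/
def rules17 : Set ℕ := {n | 1 ≤ n ∧ n ≤ 7}
/-- Rules (1)-(5). -/
def rules15 : Set ℕ := {n | 1 ≤ n ∧ n ≤ 5}
/-- Rules (1)-(4). -/
def rules14 : Set ℕ := {n | 1 ≤ n ∧ n ≤ 4}
/-- Rules (5), (6), (7). -/
def rules567 : Set ℕ := {5, 6, 7}

/-- The congruence `=_CM` generated by the Cartesian monoid axioms (i)-(iv)
and the monoid axioms for `comp` with unit `I`. -/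
inductive CMEq : Term → Term → Prop
  | proj_left (f g : Term) : CMEq (comp L (pair f g)) f
  | proj_right (f g : Term) : CMEq (comp R (pair f g)) g
  | lift (f g h : Term) : CMEq (comp (pair f g) h) (pair (comp f h) (comp g h))
  | surj : CMEq (pair L R) I
  | assoc (a b c : Term) : CMEq (comp (comp a b) c) (comp a (comp b c))
  | one_mul (a : Term) : CMEq (comp I a) a
  | mul_one (a : Term) : CMEq (comp a I) a
  | refl (a : Term) : CMEq a a
  | symm {a b : Term} : CMEq a b → CMEq b a
  | trans {a b c : Term} : CMEq a b → CMEq b c → CMEq a c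
  | comp_congr {a a' b b' : Term} :
      CMEq a a' → CMEq b b' → CMEq (comp a b) (comp a' b')
  | pair_congr {a a' b b' : Term} :
      CMEq a a' → CMEq b b' → CMEq (pair a b) (pair a' b')

/-- The congruence `=_CQ` generated by the axioms (i)-(iii)
and the monoid axioms (no surjectivity `⟨L,R⟩ = I`). -/
inductive CQEq : Term → Term → Prop
  | proj_left (f g : Term) : CQEq (comp L (pair f g)) f
  | proj_right (f g : Term) : CQEq (comp R (pair f g)) g
  | lift (f g h : Term) : CQEq (comp (pair f g) h) (pair (comp f h) (comp g h))
  | assoc (a b c : Term) : CQEq (comp (comp a b) c) (comp a (comp b c))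
  | one_mul (a : Term) : CQEq (comp I a) a
  | mul_one (a : Term) : CQEq (comp a I) a
  | refl (a : Term) : CQEq a a
  | symm {a b : Term} : CQEq a b → CQEq b a
  | trans {a b c : Term} : CQEq a b → CQEq b c → CQEq a c
  | comp_congr {a a' b b' : Term} :
      CQEq a a' → CQEq b b' → CQEq (comp a b) (comp a' b')
  | pair_congr {a a' b b' : Term} :
      CQEq a a' → CQEq b b' → CQEq (pair a b) (pair a' b')

/-- An injective numerical encoding of terms, used to state computability. -/
def encodeTerm : Term → ℕ
  | I => 0
  | L => 1
  | R => 2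
  | comp a b => 2 * Nat.pair (encodeTerm a) (encodeTerm b) + 3
  | pair a b => 2 * Nat.pair (encodeTerm a) (encodeTerm b) + 4

/-- A numerical encoding of finite lists of terms. -/
def encodeTermList : List Term → ℕ
  | [] => 0
  | a :: l => Nat.pair (encodeTerm a) (encodeTermList l) + 1

/-- The product of a list of terms (with `I` as the empty product). -/
def listProd : List Term → Term
  | [] => I
  | a :: l => comp a (listProd l)

/-- `=_CQ` as a setoid. -/
def cqSetoid : Setoid Term :=
  ⟨CQEq, ⟨fun a => CQEq.refl a, fun h => h.symm, fun h₁ h₂ => h₁.trans h₂⟩⟩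

/-- The free categorical quasiproduct monoid `CQ = T / =_CQ`. -/
def CQ : Type := Quotient cqSetoid

/-- `=_CM` as a setoid. -/
def cmSetoid : Setoid Term :=
  ⟨CMEq, ⟨fun a => CMEq.refl a, fun h => h.symm, fun h₁ h₂ => h₁.trans h₂⟩⟩

/-- The free Cartesian monoid `CM = T / =_CM`. -/
def CM : Type := Quotient cmSetoid

/-- The submonoid of `CQ` generated by (the classes of) the members of `B`,
as a set of elements of `CQ`. -/
def genSubmonoidCQ (B : List Term) : Set CQ :=
  {x | ∃ l : List Term, (∀ t ∈ l, t ∈ B) ∧ Quotient.mk cqSetoid (listProd l) = x}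

/-- The submonoid of `CM` generated by (the classes of) the members of `B`,
as a set of elements of `CM`. -/
def genSubmonoidCM (B : List Term) : Set CM :=
  {x | ∃ l : List Term, (∀ t ∈ l, t ∈ B) ∧ Quotient.mk cmSetoid (listProd l) = x}

/-- A shift: a product (under `comp`) of copies of `L` and `R`,
with `I` as the empty product. -/
inductive IsShift : Term → Prop
  | unit : IsShift I
  | left : IsShift L
  | right : IsShift R
  | comp {s t : Term} : IsShift s → IsShift t → IsShift (comp s t)

/-- The CQ normal form (normal form w.r.t. rules (1)-(5)) of `X` is a shift. -/
def nfIsShift (X : Term) : Prop :=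
  ∃ N, Red rules15 X N ∧ NF rules15 N ∧ IsShift N

/-- The product `F_0 * ⋯ * F_{n-1}` of the first `n` values of a sequence. -/
def prodTake (f : ℕ → Term) (n : ℕ) : Term := listProd ((List.range n).map f)

/-- `B` covers Cantor space: there is an infinite sequence of members of `B`
such that for each shift `S` some finite initial product composed with `S`
has a CQ normal form that is not a shift. -/
def Covers (B : List Term) : Prop :=
  ∃ f : ℕ → Term, (∀ n, f n ∈ B) ∧
    ∀ S, IsShift S → ∃ n, ¬ nfIsShift (comp S (prodTake f n))

/-- The shift `S` is bad for `B`: for every finite sequence of members of `B`,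
the CQ normal form of `S*F_1*⋯*F_n` is a shift. -/
def BadFor (B : List Term) (S : Term) : Prop :=
  ∀ l : List Term, (∀ t ∈ l, t ∈ B) → nfIsShift (comp S (listProd l))

/-- The length of a shift: the number of occurrences of `L` and `R`. -/
def lenLR : Term → ℕ
  | I => 0
  | L => 1
  | R => 1
  | comp a b => lenLR a + lenLR b
  | pair a b => lenLR a + lenLR b

/-- `S` is extenuative for `B`: it is bad for `B` and the CQ normal forms of
`S*F_1*⋯*F_k` (for `F_i` in `B`) have unbounded length. -/
def Extenuative (B : List Term) (S : Term) : Prop :=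
  BadFor B S ∧ ∀ n : ℕ, ∃ l : List Term, (∀ t ∈ l, t ∈ B) ∧
    ∃ N, Red rules15 (comp S (listProd l)) N ∧ NF rules15 N ∧ n ≤ lenLR N

/-- A term represents a right invertible element of CM. -/
def RightInvCM (F : Term) : Prop := ∃ G, CMEq (comp F G) I

/-!
Read a word over `{L, R}` from right to left, so that multiplying a shift by a term on the right
changes only a prefix of its word: a term acts on words as a partial map with finitely many prefix
rules `p ++ v ↦ q ++ v`, undefined at finitely many words. The normal form of a term is a shift iff
its action on the empty word is defined. Hence `S` is bad for `B` iff its own action on the empty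
word is defined and the prefix rules of the members of `B` do not lead from the resulting word to
one of the finitely many words at which some member of `B` is undefined.

Reachability by prefix rewriting is recursively enumerable, and so is its negation. Let `N` bound
the lengths of the targets and of the left-hand sides. A derivation from `w ++ [b]` to a word of
length at most `N` first rewrites `w` to a word of length at most `N`, without touching `b`, so the
words of length at most `N` reachable from `w` are computed by a finite automaton reading `w`. Thus
unreachability is always witnessed by a finite automaton whose set of states decreases along the
rules, and this property of an automaton can be checked on the finitely many rules. Post's theorem
then gives decidability.
-/

theorem rePred_exists_of_primrecRel {α β : Type*} [Primcodable α] [Primcodable β]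
    {p : α → β → Prop} (hp : PrimrecRel p) : REPred fun a => ∃ b, p a b := by
  classical
  have hsearch : Primrec₂ fun (a : α) (n : ℕ) =>
      (Encodable.decode n : Option β).bind fun b => if p a b then some () else none :=
    Primrec.option_bind (Primrec.decode.comp Primrec.snd) <|
      Primrec.ite (hp.comp (Primrec.fst.comp Primrec.fst) Primrec.snd)
        (Primrec.const _) (Primrec.const _)
  refine (Partrec.rfindOpt hsearch.to_comp).dom_re.of_eq fun a => ?_
  simp only [Nat.rfindOpt_dom, Option.mem_def, Option.bind_eq_some_iff,
    Option.ite_none_right_eq_some]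
  exact ⟨fun ⟨_, _, b, _, hb, _⟩ => ⟨b, hb⟩,
    fun ⟨b, hb⟩ => ⟨Encodable.encode b, (), b, Encodable.encodek b, hb, trivial⟩⟩

theorem primrecRel_mem {α : Type*} [Primcodable α] : PrimrecRel fun (x : α) (l : List α) => x ∈ l :=
  (Primrec.eq.exists_mem_list.comp Primrec.snd Primrec.fst).of_eq fun _ => exists_eq_right

theorem primrecRel_isPrefix {α : Type*} [Primcodable α] :
    PrimrecRel fun u w : List α => u <+: w :=
  (Primrec.eq.comp Primrec.fst
    (Primrec.list_take.comp (Primrec.list_length.comp Primrec.fst) Primrec.snd)).of_eq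
    fun _ => List.prefix_iff_eq_take.symm

/-! ### Prefix rewriting -/

/-- A prefix rewriting system: the rule `(p, q)` rewrites `p ++ v` to `q ++ v`. -/
abbrev PrefixSystem (α : Type*) := List (List α × List α)

namespace PrefixSystem

variable {α : Type*} {T : PrefixSystem α} {u v w z : List α}

/-- One prefix rewriting step. -/
def Rewrites (T : PrefixSystem α) (w w' : List α) : Prop :=
  ∃ r ∈ T, ∃ v, w = r.1 ++ v ∧ w' = r.2 ++ v

/-- Prefix rewriting in any number of steps. -/
abbrev Reaches (T : PrefixSystem α) : List α → List α → Prop :=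
  Relation.ReflTransGen T.Rewrites

/-- Some word of `W` can be rewritten to some word of `Z`. -/
def CanReach (T : PrefixSystem α) (W Z : List (List α)) : Prop :=
  ∃ w ∈ W, ∃ z ∈ Z, T.Reaches w z

theorem Rewrites.append_right (h : T.Rewrites w z) (v : List α) :
    T.Rewrites (w ++ v) (z ++ v) := by
  obtain ⟨r, hr, u, rfl, rfl⟩ := h
  exact ⟨r, hr, u ++ v, List.append_assoc .., List.append_assoc ..⟩

theorem Reaches.append_right (h : T.Reaches w z) (v : List α) : T.Reaches (w ++ v) (z ++ v) :=
  h.lift (· ++ v) fun _ _ hab => hab.append_right v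

section Successors

variable [DecidableEq α]

/-- The list of all one-step rewrites of `w`. -/
def successors (T : PrefixSystem α) (w : List α) : List (List α) :=
  (T.filter fun r => r.1 <+: w).map fun r => r.2 ++ w.drop r.1.length

theorem mem_successors : z ∈ T.successors w ↔ T.Rewrites w z := by
  simp only [successors, List.mem_map, List.mem_filter, decide_eq_true_eq, Rewrites, and_assoc]
  refine exists_congr fun r => and_congr_right fun _ => ⟨?_, ?_⟩
  · rintro ⟨⟨v, rfl⟩, rfl⟩
    exact ⟨v, rfl, by rw [List.drop_left]⟩
  · rintro ⟨v, rfl, rfl⟩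
    exact ⟨List.prefix_append .., by rw [List.drop_left]⟩

/-- The list of all words obtained from words of `W` in exactly `n` steps. -/
def descendants (T : PrefixSystem α) (W : List (List α)) (n : ℕ) : List (List α) :=
  (fun V => V.flatMap T.successors)^[n] W

theorem mem_descendants_succ {W : List (List α)} {n : ℕ} :
    z ∈ T.descendants W (n + 1) ↔ ∃ w ∈ T.descendants W n, T.Rewrites w z := by
  simp only [descendants, Function.iterate_succ_apply', List.mem_flatMap, mem_successors]

theorem exists_mem_descendants_iff {W : List (List α)} :
    (∃ n, z ∈ T.descendants W n) ↔ ∃ w ∈ W, T.Reaches w z := by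
  constructor
  · rintro ⟨n, hz⟩
    induction n generalizing z with
    | zero => exact ⟨z, hz, .refl⟩
    | succ n ih =>
      obtain ⟨y, hy, hyz⟩ := mem_descendants_succ.1 hz
      obtain ⟨w, hw, hwy⟩ := ih hy
      exact ⟨w, hw, hwy.tail hyz⟩
  · rintro ⟨w, hw, hwz⟩
    induction hwz with
    | refl => exact ⟨0, hw⟩
    | tail _ hyz ih =>
      obtain ⟨n, hn⟩ := ih
      exact ⟨n + 1, mem_descendants_succ.2 ⟨_, hn, hyz⟩⟩

theorem canReach_iff_exists_descendants {W Z : List (List α)} :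
    T.CanReach W Z ↔ ∃ n, ∃ z ∈ Z, z ∈ T.descendants W n := by
  rw [exists_comm]
  simp only [exists_and_left, exists_mem_descendants_iff]
  exact ⟨fun ⟨w, hw, z, hz, h⟩ => ⟨z, hz, w, hw, h⟩, fun ⟨z, hz, w, hw, h⟩ => ⟨w, hw, z, hz, h⟩⟩

variable [Primcodable α]

theorem primrec₂_successors : Primrec₂ (successors : PrefixSystem α → List α → List (List α)) := by
  have happlicable : Primrec₂ fun (T : PrefixSystem α) (w : List α) =>
      T.filter fun r => r.1 <+: w :=
    PrimrecRel.listFilter (R := fun (r : List α × List α) w => r.1 <+: w)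
      (primrecRel_isPrefix.comp (Primrec.fst.comp Primrec.fst) Primrec.snd)
  exact Primrec.list_map happlicable <| Primrec.list_append.comp
    (Primrec.snd.comp Primrec.snd)
    (Primrec.list_drop.comp (Primrec.list_length.comp (Primrec.fst.comp Primrec.snd))
      (Primrec.snd.comp Primrec.fst))

theorem primrec_descendants :
    Primrec fun a : (PrefixSystem α × List (List α)) × ℕ => descendants a.1.1 a.1.2 a.2 :=
  Primrec.nat_iterate Primrec.snd (Primrec.snd.comp Primrec.fst) <|
    Primrec.list_flatMap Primrec.snd <|
      primrec₂_successors.comp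
        (Primrec.fst.comp <| Primrec.fst.comp <| Primrec.fst.comp Primrec.fst) Primrec.snd

end Successors

theorem rePred_canReach [Primcodable α] :
    REPred fun a : PrefixSystem α × List (List α) × List (List α) => a.1.CanReach a.2.1 a.2.2 := by
  classical
  have hfound : PrimrecRel fun (a : PrefixSystem α × List (List α) × List (List α)) (n : ℕ) =>
      ∃ z ∈ a.2.2, z ∈ a.1.descendants a.2.1 n :=
    primrecRel_mem.exists_mem_list.comp (Primrec.snd.comp <| Primrec.snd.comp Primrec.fst) <|
      primrec_descendants.comp <| Primrec.pair
        (Primrec.pair (Primrec.fst.comp Primrec.fst)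
          (Primrec.fst.comp <| Primrec.snd.comp Primrec.fst))
        Primrec.snd
  exact (rePred_exists_of_primrecRel hfound).of_eq
    fun _ => canReach_iff_exists_descendants.symm

-- Follow the steps until one consumes `b`: the left-hand side of its rule is then `y ++ [b]` for
-- the current `y`, so `y` is short.
theorem Reaches.exists_concat {N : ℕ} {b : α} (hT : ∀ r ∈ T, r.1.length ≤ N + 1)
    (hz : z.length ≤ N) (h : T.Reaches (w ++ [b]) z) :
    ∃ y, y.length ≤ N ∧ T.Reaches w y ∧ T.Reaches (y ++ [b]) z := by
  generalize hx : w ++ [b] = x at h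
  induction h using Relation.ReflTransGen.head_induction_on generalizing w with
  | refl =>
    subst hx
    exact ⟨w, by simp at hz; omega, .refl, .refl⟩
  | head hxx' hx'z ih =>
    obtain ⟨r, hr, v, hxv, rfl⟩ := hxx'
    subst hx
    rcases v.eq_nil_or_concat with rfl | ⟨v, c, rfl⟩
    · have hlen := hT r hr
      rw [List.append_nil] at hxv
      rw [← hxv, List.length_append, List.length_singleton] at hlen
      exact ⟨w, by omega, .refl, hx'z.head ⟨r, hr, [], by simpa using hxv, rfl⟩⟩
    · rw [List.concat_eq_append, ← List.append_assoc] at hxv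
      obtain ⟨rfl, hbc⟩ := List.append_inj' hxv rfl
      obtain rfl := List.singleton_inj.1 hbc
      obtain ⟨y, hyN, hwy, hyz⟩ := ih (w := r.2 ++ v) (by simp)
      exact ⟨y, hyN, hwy.head ⟨r, hr, v, rfl, rfl⟩, hyz⟩

end PrefixSystem

/-! ### Unreachability certificates -/

/-- A nondeterministic automaton whose states are words, given by the finite list of its
transitions. The pair `(y ++ [b], z)` is a transition from `y` to `z` reading the letter `b`, and
the pair `([], z)` makes `z` an initial state. -/
abbrev WordAutomaton (α : Type*) := List (List α × List α)

namespace WordAutomaton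

variable {α : Type*} [DecidableEq α] {Δ : WordAutomaton α} {A B : List (List α)}
  {u v w z : List α}

/-- The words paired with `u` in the list of transitions. -/
def targets (Δ : WordAutomaton α) (u : List α) : List (List α) :=
  (Δ.filter fun t => t.1 = u).map Prod.snd

/-- The states reached by reading the word `w` from one of the states in `A`. -/
def evalFrom (Δ : WordAutomaton α) (A : List (List α)) (w : List α) : List (List α) :=
  w.foldl (fun A b => A.flatMap fun y => Δ.targets (y ++ [b])) A

/-- The states reached by reading the word `w` from an initial state. -/
def eval (Δ : WordAutomaton α) (w : List α) : List (List α) :=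
  Δ.evalFrom (Δ.targets []) w

theorem mem_targets : z ∈ Δ.targets u ↔ (u, z) ∈ Δ := by
  simp [targets]

theorem eval_append : Δ.eval (u ++ v) = Δ.evalFrom (Δ.eval u) v :=
  List.foldl_append

theorem mem_eval_concat {b : α} :
    z ∈ Δ.eval (w ++ [b]) ↔ ∃ y ∈ Δ.eval w, (y ++ [b], z) ∈ Δ := by
  simp [eval_append, evalFrom, mem_targets]

theorem evalFrom_subset (h : A ⊆ B) (w : List α) : Δ.evalFrom A w ⊆ Δ.evalFrom B w := by
  induction w generalizing A B with
  | nil => exact h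
  | cons b _ ih =>
    refine ih fun z hz => ?_
    obtain ⟨y, hy, hyz⟩ := List.mem_flatMap.1 hz
    exact List.mem_flatMap.2 ⟨y, h hy, hyz⟩

variable {T : PrefixSystem α} {W Z : List (List α)}

theorem eval_subset_of_reaches (hT : ∀ r ∈ T, Δ.eval r.2 ⊆ Δ.eval r.1) (h : T.Reaches w z) :
    Δ.eval z ⊆ Δ.eval w := by
  induction h with
  | refl => exact List.Subset.refl _
  | tail _ hstep ih =>
    obtain ⟨r, hr, v, rfl, rfl⟩ := hstep
    refine List.Subset.trans ?_ ih
    simpa only [eval_append] using evalFrom_subset (hT r hr) v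

/-- `Δ` certifies that no word of `W` reaches a word of `Z`: the states reached on a word only
decrease under rewriting, they contain `z` for every `z ∈ Z` read, but for no `w ∈ W` read. -/
def Separates (Δ : WordAutomaton α) (T : PrefixSystem α) (W Z : List (List α)) : Prop :=
  (∀ r ∈ T, ∀ z ∈ Δ.eval r.2, z ∈ Δ.eval r.1) ∧
    (∀ z ∈ Z, z ∈ Δ.eval z) ∧ ∀ w ∈ W, ∀ z ∈ Z, z ∉ Δ.eval w

theorem Separates.not_canReach (h : Δ.Separates T W Z) : ¬T.CanReach W Z := by
  rintro ⟨w, hw, z, hz, hwz⟩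
  exact h.2.2 w hw z hz (eval_subset_of_reaches (fun r hr _ => h.1 r hr _) hwz (h.2.1 z hz))

theorem exists_mem_eval_iff_reaches [Finite α] (T : PrefixSystem α) {N : ℕ}
    (hT : ∀ r ∈ T, r.1.length ≤ N + 1) :
    ∃ Δ : WordAutomaton α, ∀ w z, z ∈ Δ.eval w ↔ z.length ≤ N ∧ T.Reaches w z := by
  have hfin : {t : List α × List α |
      t.1.length ≤ N + 1 ∧ t.2.length ≤ N ∧ T.Reaches t.1 t.2}.Finite :=
    ((List.finite_length_le α (N + 1)).prod (List.finite_length_le α N)).subset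
      fun t ht => ⟨ht.1, ht.2.1⟩
  refine ⟨hfin.toFinset.toList, fun w => ?_⟩
  induction w using List.reverseRecOn with
  | nil => simp [eval, evalFrom, mem_targets]
  | append_singleton w b ih =>
    intro z
    simp only [mem_eval_concat, ih, Finset.mem_toList, Set.Finite.mem_toFinset, Set.mem_ofPred_eq,
      List.length_append, List.length_singleton]
    constructor
    · rintro ⟨y, ⟨_, hwy⟩, _, hz, hyz⟩
      exact ⟨hz, (hwy.append_right [b]).trans hyz⟩
    · rintro ⟨hz, hwz⟩
      obtain ⟨y, hy, hwy, hyz⟩ := hwz.exists_concat hT hz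
      exact ⟨y, ⟨hy, hwy⟩, by omega, hz, hyz⟩

theorem exists_separates_iff [Finite α] :
    (∃ Δ : WordAutomaton α, Δ.Separates T W Z) ↔ ¬T.CanReach W Z := by
  refine ⟨fun ⟨_, h⟩ => h.not_canReach, fun hWZ => ?_⟩
  obtain ⟨N, hN⟩ : ∃ N, ∀ u ∈ T.map Prod.fst ++ Z, u.length ≤ N :=
    ⟨((T.map Prod.fst ++ Z).map List.length).sum,
      fun u hu => List.le_sum_of_mem (List.mem_map_of_mem hu)⟩
  have hT : ∀ r ∈ T, r.1.length ≤ N + 1 := fun r hr =>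
    (hN _ (List.mem_append_left _ (List.mem_map_of_mem hr))).trans N.le_succ
  obtain ⟨Δ, hΔ⟩ := exists_mem_eval_iff_reaches T hT
  refine ⟨Δ, fun r hr z hz => ?_, fun z hz => ?_, fun w hw z hz hzw => ?_⟩
  · obtain ⟨hzN, hrz⟩ := (hΔ _ _).1 hz
    have hstep : T.Rewrites r.1 r.2 := ⟨r, hr, [], by simp⟩
    exact (hΔ _ _).2 ⟨hzN, hrz.head hstep⟩
  · exact (hΔ _ _).2 ⟨hN z (List.mem_append_right _ hz), .refl⟩
  · exact hWZ ⟨w, hw, z, hz, ((hΔ _ _).1 hzw).2⟩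

variable [Primcodable α]

theorem primrec₂_targets : Primrec₂ (targets : WordAutomaton α → List α → List (List α)) :=
  Primrec.list_map
    (PrimrecRel.listFilter (R := fun (t : List α × List α) u => t.1 = u)
      (Primrec.eq.comp (Primrec.fst.comp Primrec.fst) Primrec.snd))
    (Primrec.snd.comp Primrec.snd)

theorem primrec₂_eval : Primrec₂ (eval : WordAutomaton α → List α → List (List α)) := by
  have hread : Primrec₂ fun (a : WordAutomaton α × List α) (s : List (List α) × α) =>
      s.1.flatMap fun y => a.1.targets (y ++ [s.2]) :=
    Primrec.list_flatMap (Primrec.fst.comp Primrec.snd) <|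
      (primrec₂_targets.comp (Primrec.fst.comp <| Primrec.fst.comp Primrec.fst) <|
        Primrec.list_concat.comp Primrec.snd <|
          Primrec.snd.comp <| Primrec.snd.comp Primrec.fst).to₂
  exact Primrec.list_foldl Primrec.snd (primrec₂_targets.comp Primrec.fst (Primrec.const [])) hread

theorem primrecRel_separates :
    PrimrecRel fun (a : PrefixSystem α × List (List α) × List (List α)) (Δ : WordAutomaton α) =>
      Δ.Separates a.1 a.2.1 a.2.2 := by
  have hmem : PrimrecRel fun (z : List α) (c : List α × WordAutomaton α) => z ∈ c.2.eval c.1 :=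
    primrecRel_mem.comp Primrec.fst
      (primrec₂_eval.comp (Primrec.snd.comp Primrec.snd) (Primrec.fst.comp Primrec.snd))
  have hrule : PrimrecRel fun (r : List α × List α) (Δ : WordAutomaton α) =>
      ∀ z ∈ Δ.eval r.2, z ∈ Δ.eval r.1 :=
    hmem.forall_mem_list.comp
      (primrec₂_eval.comp Primrec.snd (Primrec.snd.comp Primrec.fst))
      (Primrec.pair (Primrec.fst.comp Primrec.fst) Primrec.snd)
  have htarget : PrimrecRel fun (z : List α) (Δ : WordAutomaton α) => z ∈ Δ.eval z :=
    hmem.comp Primrec.fst Primrec.id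
  have hsource : PrimrecRel fun (w : List α) (c : List (List α) × WordAutomaton α) =>
      ∀ z ∈ c.1, z ∉ c.2.eval w :=
    (PrimrecRel.forall_mem_list hmem.not).comp (Primrec.fst.comp Primrec.snd)
      (Primrec.pair Primrec.fst (Primrec.snd.comp Primrec.snd))
  exact (hrule.forall_mem_list.comp (Primrec.fst.comp Primrec.fst) Primrec.snd).and <|
    (htarget.forall_mem_list.comp (Primrec.snd.comp <| Primrec.snd.comp Primrec.fst)
      Primrec.snd).and <|
    hsource.forall_mem_list.comp (Primrec.fst.comp <| Primrec.snd.comp Primrec.fst)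
      (Primrec.pair (Primrec.snd.comp <| Primrec.snd.comp Primrec.fst) Primrec.snd)

end WordAutomaton

theorem PrefixSystem.computablePred_canReach {α : Type*} [Finite α] [Primcodable α] :
    ComputablePred fun a : PrefixSystem α × List (List α) × List (List α) =>
      a.1.CanReach a.2.1 a.2.2 := by
  classical
  exact ComputablePred.computable_iff_re_compl_re.2 ⟨rePred_canReach,
    (rePred_exists_of_primrecRel WordAutomaton.primrecRel_separates).of_eq
      fun _ => WordAutomaton.exists_separates_iff⟩

/-! ### Partial maps given by prefix rules -/

namespace PrefixSystem

variable {α : Type*} {T U : PrefixSystem α} {w z : List α}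

/-- The system with all rules reversed. -/
def inverse (T : PrefixSystem α) : PrefixSystem α := T.map Prod.swap

theorem rewrites_inverse : T.inverse.Rewrites z w ↔ T.Rewrites w z := by
  simp only [Rewrites, inverse, List.mem_map, Prod.exists, Prod.swap_prod_mk, Prod.mk.injEq]
  grind

theorem primrec_inverse [Primcodable α] :
    Primrec (inverse : PrefixSystem α → PrefixSystem α) :=
  Primrec.list_map Primrec.id
    (Primrec.pair (Primrec.snd.comp Primrec.snd) (Primrec.fst.comp Primrec.snd))

variable [DecidableEq α]

/-- The composite system, one step of which is a step of `T` followed by a step of `U`. -/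
def comp (T U : PrefixSystem α) : PrefixSystem α :=
  (T.flatMap fun r => (U.successors r.2).map fun z => (r.1, z)) ++
    U.flatMap fun s => (T.inverse.successors s.1).map fun w => (w, s.2)

theorem mem_comp {r : List α × List α} :
    r ∈ T.comp U ↔
      (∃ q, (r.1, q) ∈ T ∧ U.Rewrites q r.2) ∨ ∃ p, T.Rewrites r.1 p ∧ (p, r.2) ∈ U := by
  simp only [comp, List.mem_append, List.mem_flatMap, List.mem_map, mem_successors,
    rewrites_inverse, Prod.exists, Prod.ext_iff]
  grind

theorem rewrites_comp : (T.comp U).Rewrites w z ↔ ∃ y, T.Rewrites w y ∧ U.Rewrites y z := by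
  constructor
  · rintro ⟨⟨p, q⟩, hr, v, rfl, rfl⟩
    rcases mem_comp.1 hr with ⟨y, hT, hU⟩ | ⟨y, hT, hU⟩
    · exact ⟨y ++ v, ⟨_, hT, v, rfl, rfl⟩, hU.append_right v⟩
    · exact ⟨y ++ v, hT.append_right v, ⟨_, hU, v, rfl, rfl⟩⟩
  · rintro ⟨y, ⟨⟨p, q⟩, hT, v, rfl, rfl⟩, ⟨⟨p', q'⟩, hU, v', hy, rfl⟩⟩
    rcases List.append_eq_append_iff.1 hy with ⟨x, hp', rfl⟩ | ⟨x, hq, rfl⟩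
    · exact ⟨(p ++ x, q'), mem_comp.2 (.inr ⟨p', ⟨_, hT, x, rfl, hp'⟩, hU⟩), v',
        (List.append_assoc ..).symm, rfl⟩
    · exact ⟨(p, q' ++ x), mem_comp.2 (.inl ⟨q, hT, ⟨_, hU, x, hq, rfl⟩⟩), v,
        rfl, (List.append_assoc ..).symm⟩

theorem primrec₂_comp [Primcodable α] :
    Primrec₂ (comp : PrefixSystem α → PrefixSystem α → PrefixSystem α) := by
  have hleft : Primrec₂ fun (c : PrefixSystem α × PrefixSystem α) (r : List α × List α) =>
      (c.2.successors r.2).map fun z => (r.1, z) :=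
    Primrec.list_map
      (primrec₂_successors.comp (Primrec.snd.comp Primrec.fst) (Primrec.snd.comp Primrec.snd))
      (Primrec.pair (Primrec.fst.comp <| Primrec.snd.comp Primrec.fst) Primrec.snd)
  have hright : Primrec₂ fun (c : PrefixSystem α × PrefixSystem α) (s : List α × List α) =>
      (c.1.inverse.successors s.1).map fun w => (w, s.2) :=
    Primrec.list_map
      (primrec₂_successors.comp (primrec_inverse.comp <| Primrec.fst.comp Primrec.fst)
        (Primrec.fst.comp Primrec.snd))
      (Primrec.pair Primrec.snd (Primrec.snd.comp <| Primrec.snd.comp Primrec.fst))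
  exact Primrec.list_append.comp (Primrec.list_flatMap Primrec.fst hleft)
    (Primrec.list_flatMap Primrec.snd hright)

end PrefixSystem

/-- The partial map on binary words that strips the first letter of a word and applies `f` or `g`
to the rest, according to that letter. -/
def splitWord {β : Type*} (f g : List Bool → Option β) : List Bool → Option β
  | [] => none
  | false :: w => f w
  | true :: w => g w

/-- A finite description of a partial map on words: a prefix rewriting system, whose steps form
the graph of the map, and the list of all words at which the map is undefined. -/
abbrev PrefixTable (α : Type*) := PrefixSystem α × List (List α)

namespace PrefixTable

variable {α : Type*} {D E : PrefixTable α} {f g : List α → Option (List α)}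

/-- The partial map described by the table `D` is `f`. -/
def Describes (D : PrefixTable α) (f : List α → Option (List α)) : Prop :=
  (∀ w z, D.1.Rewrites w z ↔ f w = some z) ∧ ∀ w, w ∈ D.2 ↔ f w = none

theorem describes_singleton (q : List α) : Describes ([([], q)], []) fun w => some (q ++ w) := by
  simp [Describes, PrefixSystem.Rewrites, eq_comm]

/-- The table of the composite of two partial maps. -/
def comp [DecidableEq α] (D E : PrefixTable α) : PrefixTable α :=
  (D.1.comp E.1, D.2 ++ E.2.flatMap D.1.inverse.successors)

theorem Describes.comp [DecidableEq α] (hD : D.Describes f) (hE : E.Describes g) :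
    (D.comp E).Describes fun w => (f w).bind g := by
  refine ⟨fun w z => ?_, fun w => ?_⟩
  · simp only [PrefixTable.comp, PrefixSystem.rewrites_comp, hD.1, hE.1, Option.bind_eq_some_iff]
  · simp only [PrefixTable.comp, List.mem_append, List.mem_flatMap, PrefixSystem.mem_successors,
      PrefixSystem.rewrites_inverse, hD.1, hD.2, hE.2]
    cases f w <;> simp

/-- The table of `splitWord f g` from tables of `f` and `g`. -/
def pair (D E : PrefixTable Bool) : PrefixTable Bool :=
  ((D.1.map fun r => (false :: r.1, r.2)) ++ E.1.map fun r => (true :: r.1, r.2),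
    [] :: (D.2.map (List.cons false) ++ E.2.map (List.cons true)))

theorem Describes.pair {D E : PrefixTable Bool} {f g : List Bool → Option (List Bool)}
    (hD : D.Describes f) (hE : E.Describes g) : (D.pair E).Describes (splitWord f g) := by
  refine ⟨fun w z => ?_, fun w => ?_⟩
  · rcases w with _ | ⟨_ | _, w⟩ <;>
      simp [splitWord, PrefixTable.pair, ← hD.1, ← hE.1, PrefixSystem.Rewrites, or_and_right,
        exists_or]
  · rcases w with _ | ⟨_ | _, w⟩ <;> simp [splitWord, PrefixTable.pair, ← hD.2, ← hE.2]

theorem primrec₂_comp [DecidableEq α] [Primcodable α] :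
    Primrec₂ (comp : PrefixTable α → PrefixTable α → PrefixTable α) :=
  Primrec.pair
    (PrefixSystem.primrec₂_comp.comp (Primrec.fst.comp Primrec.fst) (Primrec.fst.comp Primrec.snd))
    (Primrec.list_append.comp (Primrec.snd.comp Primrec.fst) <|
      Primrec.list_flatMap (Primrec.snd.comp Primrec.snd) <|
        (PrefixSystem.primrec₂_successors.comp
          (PrefixSystem.primrec_inverse.comp <| Primrec.fst.comp <| Primrec.fst.comp Primrec.fst)
          Primrec.snd).to₂)

theorem primrec₂_pair : Primrec₂ pair := by
  have hrule (b : Bool) : Primrec fun T : PrefixSystem Bool => T.map fun r => (b :: r.1, r.2) :=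
    Primrec.list_map Primrec.id <| Primrec.pair
      (Primrec.list_cons.comp (Primrec.const b) (Primrec.fst.comp Primrec.snd))
      (Primrec.snd.comp Primrec.snd)
  have hword (b : Bool) : Primrec fun W : List (List Bool) => W.map (List.cons b) :=
    Primrec.list_map Primrec.id (Primrec.list_cons.comp (Primrec.const b) Primrec.snd)
  exact Primrec.pair
    (Primrec.list_append.comp ((hrule false).comp (Primrec.fst.comp Primrec.fst))
      ((hrule true).comp (Primrec.fst.comp Primrec.snd)))
    (Primrec.list_cons.comp (Primrec.const []) <| Primrec.list_append.comp
      ((hword false).comp (Primrec.snd.comp Primrec.fst))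
      ((hword true).comp (Primrec.snd.comp Primrec.snd)))

end PrefixTable

/-! ### Recursion over codes of terms -/

theorem encodeTerm_injective : Function.Injective encodeTerm := by
  intro s
  induction s <;> intro t h <;> cases t <;> grind [encodeTerm, Nat.pair_eq_pair]

theorem encodeTerm_surjective : Function.Surjective encodeTerm := by
  intro n
  induction n using Nat.strong_induction_on with
  | _ n ih =>
    rcases Nat.lt_or_ge n 3 with hn | hn
    · interval_cases n
      exacts [⟨I, rfl⟩, ⟨L, rfl⟩, ⟨R, rfl⟩]
    · have hleft := Nat.unpair_left_le ((n - 3) / 2)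
      have hright := Nat.unpair_right_le ((n - 3) / 2)
      obtain ⟨a, ha⟩ := ih ((n - 3) / 2).unpair.1 (by omega)
      obtain ⟨b, hb⟩ := ih ((n - 3) / 2).unpair.2 (by omega)
      rcases Nat.mod_two_eq_zero_or_one (n - 3) with hmod | hmod
      · exact ⟨comp a b, by rw [encodeTerm, ha, hb, Nat.pair_unpair]; omega⟩
      · exact ⟨pair a b, by rw [encodeTerm, ha, hb, Nat.pair_unpair]; omega⟩

/-- The numbering of terms by `encodeTerm`, as an equivalence. -/
noncomputable def termEquivNat : Term ≃ ℕ :=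
  Equiv.ofBijective encodeTerm ⟨encodeTerm_injective, encodeTerm_surjective⟩

noncomputable instance : Primcodable Term := Primcodable.ofEquiv ℕ termEquivNat

theorem encode_term (t : Term) : Encodable.encode t = encodeTerm t := rfl

theorem encode_termList (l : List Term) : Encodable.encode l = encodeTermList l := by
  induction l with
  | nil => rfl
  | cons t l ih => rw [Encodable.encode_list_cons, ih, encode_term, encodeTermList]

/-- The step of structural recursion over terms, as course-of-values recursion over their codes: `l`
is the list of the values at all codes below `l.length`, the result is the value at `l.length`. -/
def codeRecStep {σ : Type*} (i x y : σ) (c d : σ → σ → σ) (l : List σ) : σ :=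
  if l.length < 3 then [i, x, y].getD l.length i else
    (if (l.length - 3) % 2 = 0 then c else d)
      (l.getD ((l.length - 3) / 2).unpair.1 i) (l.getD ((l.length - 3) / 2).unpair.2 i)

theorem primrec_codeRecStep {σ : Type*} [Primcodable σ] (i x y : σ) {c d : σ → σ → σ}
    (hc : Primrec₂ c) (hd : Primrec₂ d) : Primrec (codeRecStep i x y c d) := by
  have hindex : Primrec fun l : List σ => l.length - 3 :=
    Primrec.nat_sub.comp Primrec.list_length (Primrec.const 3)
  have hchildren : Primrec fun l : List σ => ((l.length - 3) / 2).unpair :=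
    Primrec.unpair.comp (Primrec.nat_div.comp hindex (Primrec.const 2))
  have hleft := (Primrec.list_getD i).comp Primrec.id (Primrec.fst.comp hchildren)
  have hright := (Primrec.list_getD i).comp Primrec.id (Primrec.snd.comp hchildren)
  refine (Primrec.ite (Primrec.nat_lt.comp Primrec.list_length (Primrec.const 3))
    ((Primrec.list_getD i).comp (Primrec.const [i, x, y]) Primrec.list_length)
    (Primrec.ite (Primrec.eq.comp (Primrec.nat_mod.comp hindex (Primrec.const 2))
      (Primrec.const 0)) (hc.comp hleft hright) (hd.comp hleft hright))).of_eq fun l => ?_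
  simp only [codeRecStep, ite_apply, id]

section Compositional

variable {σ : Type*} {f : Term → σ} {c d : σ → σ → σ}

theorem codeRecStep_map_range (hfc : ∀ a b, f (comp a b) = c (f a) (f b))
    (hfd : ∀ a b, f (pair a b) = d (f a) (f b)) (t : Term) :
    codeRecStep (f I) (f L) (f R) c d
      ((List.range (encodeTerm t)).map fun n => f (termEquivNat.symm n)) = f t := by
  have hlookup {s : Term} (h : encodeTerm s < encodeTerm t) :
      ((List.range (encodeTerm t)).map fun n => f (termEquivNat.symm n)).getD (encodeTerm s)
        (f I) = f s := by
    have hsymm : termEquivNat.symm (encodeTerm s) = s := termEquivNat.symm_apply_apply s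
    simp [h, hsymm]
  cases t with
  | I | L | R => rfl
  | comp a b =>
    have ha := Nat.left_le_pair (encodeTerm a) (encodeTerm b)
    have hb := Nat.right_le_pair (encodeTerm a) (encodeTerm b)
    have hindex : encodeTerm (comp a b) - 3 = 2 * (encodeTerm a).pair (encodeTerm b) := by
      rw [encodeTerm]; omega
    rw [codeRecStep, List.length_map, List.length_range, if_neg (by rw [encodeTerm]; omega),
      hindex, if_pos (by omega), Nat.mul_div_cancel_left _ two_pos, Nat.unpair_pair,
      hlookup (by rw [encodeTerm]; omega), hlookup (by rw [encodeTerm]; omega), hfc]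
  | pair a b =>
    have ha := Nat.left_le_pair (encodeTerm a) (encodeTerm b)
    have hb := Nat.right_le_pair (encodeTerm a) (encodeTerm b)
    have hindex : encodeTerm (pair a b) - 3 = 2 * (encodeTerm a).pair (encodeTerm b) + 1 := by
      rw [encodeTerm]; omega
    have hhalf : (2 * (encodeTerm a).pair (encodeTerm b) + 1) / 2 =
        (encodeTerm a).pair (encodeTerm b) := by omega
    rw [codeRecStep, List.length_map, List.length_range, if_neg (by rw [encodeTerm]; omega),
      hindex, if_neg (by omega), hhalf, Nat.unpair_pair,
      hlookup (by rw [encodeTerm]; omega), hlookup (by rw [encodeTerm]; omega), hfd]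

theorem primrec_of_compositional [Primcodable σ] (hc : Primrec₂ c) (hd : Primrec₂ d)
    (hfc : ∀ a b, f (comp a b) = c (f a) (f b)) (hfd : ∀ a b, f (pair a b) = d (f a) (f b)) :
    Primrec f := by
  have hcodes : Primrec₂ fun (_ : Unit) n => f (termEquivNat.symm n) :=
    Primrec.nat_strong_rec _
      (Primrec.option_some.comp <| (primrec_codeRecStep (f I) (f L) (f R) hc hd).comp
        Primrec.snd).to₂ fun _ n => by
      obtain ⟨t, rfl⟩ := termEquivNat.surjective n
      rw [termEquivNat.symm_apply_apply]
      exact congrArg some (codeRecStep_map_range hfc hfd t)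
  exact (hcodes.comp (Primrec.const ()) Primrec.encode).of_eq fun t =>
    congrArg f (termEquivNat.symm_apply_apply t)

end Compositional

/-! ### Terms acting on words -/

namespace Term

/-- The partial action of terms on words from the right. A word, read from its last letter to its
first, stands for the shift that is the product of its letters, `false` for `L` and `true` for `R`;
`t.act w` is the word of the normal form of the product of this shift with `t`, if that is a
shift. -/
def act : Term → List Bool → Option (List Bool)
  | I => some
  | L => fun w => some (false :: w)
  | R => fun w => some (true :: w)
  | comp a b => fun w => (act a w).bind (act b)
  | pair a b => splitWord (act a) (act b)

/-- A table of the action of a term. -/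
def table : Term → PrefixTable Bool
  | I => ([([], [])], [])
  | L => ([([], [false])], [])
  | R => ([([], [true])], [])
  | comp a b => (table a).comp (table b)
  | pair a b => (table a).pair (table b)

theorem table_describes_act (t : Term) : t.table.Describes t.act := by
  induction t with
  | I | L | R => exact PrefixTable.describes_singleton _
  | comp a b iha ihb => exact iha.comp ihb
  | pair a b iha ihb => exact iha.pair ihb

theorem primrec_table : Primrec table :=
  primrec_of_compositional PrefixTable.primrec₂_comp PrefixTable.primrec₂_pair
    (fun _ _ => rfl) (fun _ _ => rfl)

theorem act_eq_of_assocEq {a b : Term} (h : AssocEq a b) : a.act = b.act := by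
  induction h with
  | assoc a b c => funext w; simp only [act, Option.bind_assoc]
  | refl => rfl
  | symm _ ih => exact ih.symm
  | trans _ _ ih₁ ih₂ => exact ih₁.trans ih₂
  | comp_congr _ _ ih₁ ih₂ | pair_congr _ _ ih₁ ih₂ => simp only [act, ih₁, ih₂]

theorem act_eq_of_rule {n : ℕ} {a b : Term} (hn : n ∈ rules15) (h : Rule n a b) :
    a.act = b.act := by
  cases h with
  | r1 | r2 | r4 => rfl
  | r3 => funext w; rcases w with _ | ⟨_ | _, w⟩ <;> rfl
  | r5 => funext w; exact Option.bind_fun_some _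
  | r6 | r7 => exact absurd hn.2 (by omega)

theorem act_eq_of_step {a b : Term} (h : Step rules15 a b) : a.act = b.act := by
  induction h with
  | rule hn h => exact act_eq_of_rule hn h
  | comp_left _ ih | comp_right _ ih | pair_left _ ih | pair_right _ ih => simp only [act, ih]

theorem act_eq_of_red {a b : Term} (h : Red rules15 a b) : a.act = b.act := by
  obtain ⟨c, hac, hcb⟩ := h
  rw [← act_eq_of_assocEq hcb]
  clear hcb
  induction hac with
  | refl => rfl
  | tail _ hstep ih =>
    obtain ⟨x, y, hx, hxy, hy⟩ := hstep
    rw [ih, act_eq_of_assocEq hx, act_eq_of_step hxy, act_eq_of_assocEq hy]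

theorem act_ne_none_of_isShift {s : Term} (h : IsShift s) (w : List Bool) : s.act w ≠ none := by
  induction h generalizing w with
  | unit | left | right => exact Option.some_ne_none _
  | comp _ _ ihs iht =>
    obtain ⟨v, hv⟩ := Option.ne_none_iff_exists'.1 (ihs w)
    simpa only [act, hv, Option.bind_some] using iht v

end Term

theorem AssocEq.red {J : Set ℕ} {a b : Term} (h : AssocEq a b) : Red J a b := ⟨a, .refl, h⟩

theorem Step.red {J : Set ℕ} {a b : Term} (h : Step J a b) : Red J a b :=
  ⟨b, .single ⟨a, b, .refl a, h, .refl b⟩, .refl b⟩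

namespace Red

variable {J : Set ℕ} {a b c : Term}

theorem trans (hab : Red J a b) (hbc : Red J b c) : Red J a c := by
  obtain ⟨x, hax, hxb⟩ := hab
  obtain ⟨y, hby, hyc⟩ := hbc
  rcases hby.cases_head with rfl | ⟨b', ⟨u, v, hbu, huv, hvb'⟩, hb'y⟩
  · exact ⟨x, hax, hxb.trans hyc⟩
  · exact ⟨y, hax.trans (hb'y.head ⟨u, v, hxb.trans hbu, huv, hvb'⟩), hyc⟩

theorem map {F : Term → Term} (hassoc : ∀ ⦃x y⦄, AssocEq x y → AssocEq (F x) (F y))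
    (hstep : ∀ ⦃x y⦄, Step J x y → Step J (F x) (F y)) (h : Red J a b) : Red J (F a) (F b) := by
  obtain ⟨c, hac, hcb⟩ := h
  refine ⟨F c, hac.lift F ?_, hassoc hcb⟩
  rintro x y ⟨x', y', hx, hxy, hy⟩
  exact ⟨F x', F y', hassoc hx, hstep hxy, hassoc hy⟩

theorem comp_left (h : Red J a b) (c : Term) : Red J (comp a c) (comp b c) :=
  h.map (F := (comp · c)) (fun _ _ h => h.comp_congr (.refl c)) fun _ _ h => h.comp_left

end Red

/-- The constant denoted by a letter. -/
def letterTerm : Bool → Term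
  | false => L
  | true => R

/-- The product of the shift of a word with `x`, without a superfluous unit. -/
def wordMul : List Bool → Term → Term
  | [], x => x
  | b :: w, x => comp (wordMul w (letterTerm b)) x

/-- The shift in normal form of a word. -/
def shiftOfWord : List Bool → Term
  | [] => I
  | b :: w => wordMul w (letterTerm b)

theorem wordMul_comp (w : List Bool) (x y : Term) :
    AssocEq (wordMul w (comp x y)) (comp (wordMul w x) y) := by
  cases w with
  | nil => exact .refl _
  | cons b w => exact (AssocEq.assoc _ _ _).symm

theorem Red.wordMul {J : Set ℕ} {x y : Term} (h : Red J x y) (w : List Bool) :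
    Red J (wordMul w x) (wordMul w y) := by
  cases w with
  | nil => exact h
  | cons b w => exact h.map (fun _ _ h => (AssocEq.refl _).comp_congr h) fun _ _ h => h.comp_right

theorem red_comp_shiftOfWord (w : List Bool) (x : Term) :
    Red rules15 (comp (shiftOfWord w) x) (wordMul w x) := by
  cases w with
  | nil => exact (Step.rule (by simp [rules15]) (.r4 x)).red
  | cons b w => exact (AssocEq.refl _).red

theorem red_wordMul_of_act {x : Term} {w z : List Bool} (h : x.act w = some z) :
    Red rules15 (wordMul w x) (shiftOfWord z) := by
  induction x generalizing w z with
  | I =>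
    obtain rfl : w = z := Option.some_inj.1 h
    cases w with
    | nil => exact (AssocEq.refl _).red
    | cons b w => exact (Step.rule (by simp [rules15]) (.r5 _)).red
  | L | R =>
    obtain rfl := Option.some_inj.1 h
    exact (AssocEq.refl _).red
  | comp a b iha ihb =>
    obtain ⟨y, ha, hb⟩ := Option.bind_eq_some_iff.1 h
    exact (wordMul_comp w a b).red.trans <| ((iha ha).comp_left b).trans <|
      (red_comp_shiftOfWord y b).trans (ihb hb)
  | pair a b iha ihb =>
    have hproj (c : Bool) (v : List Bool) {x : Term} {n : ℕ} (hn : n ∈ rules15)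
        (hrule : Rule n (comp (letterTerm c) (pair a b)) x) :
        Red rules15 (wordMul (c :: v) (pair a b)) (wordMul v x) :=
      (wordMul_comp v (letterTerm c) (pair a b)).symm.red.trans ((Step.rule hn hrule).red.wordMul v)
    rcases w with _ | ⟨_ | _, v⟩
    · cases h
    · exact (hproj false v (by simp [rules15]) (.r1 a b)).trans (iha h)
    · exact (hproj true v (by simp [rules15]) (.r2 a b)).trans (ihb h)

/-- The terms that are nonempty products of copies of `L` and `R`. -/
def IsLetterProduct : Term → Prop
  | L | R => True
  | comp a b => IsLetterProduct a ∧ IsLetterProduct b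
  | I | pair _ _ => False

theorem AssocEq.isLetterProduct_iff {a b : Term} (h : AssocEq a b) :
    IsLetterProduct a ↔ IsLetterProduct b := by
  induction h with
  | assoc => simp only [IsLetterProduct, and_assoc]
  | refl => rfl
  | symm _ ih => exact ih.symm
  | trans _ _ ih₁ ih₂ => exact ih₁.trans ih₂
  | comp_congr _ _ ih₁ ih₂ => exact and_congr ih₁ ih₂
  | pair_congr => rfl

theorem AssocEq.eq_I_iff {a b : Term} (h : AssocEq a b) : a = I ↔ b = I := by
  induction h with
  | assoc | comp_congr | pair_congr => simp only [reduceCtorEq]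
  | refl => rfl
  | symm _ ih => exact ih.symm
  | trans _ _ ih₁ ih₂ => exact ih₁.trans ih₂

theorem Step.not_isLetterProduct {J : Set ℕ} {a b : Term} (h : Step J a b) :
    ¬IsLetterProduct a := by
  induction h with
  | rule _ h => cases h <;> simp [IsLetterProduct]
  | comp_left _ ih => exact fun h => ih h.1
  | comp_right _ ih => exact fun h => ih h.2
  | pair_left | pair_right => exact id

theorem nf_I (J : Set ℕ) : NF J I := by
  rintro _ ⟨_, _, hx, hstep, _⟩
  obtain rfl := hx.eq_I_iff.1 rfl
  cases hstep with
  | rule _ h => cases h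

namespace IsLetterProduct

theorem nf {a : Term} (J : Set ℕ) (h : IsLetterProduct a) : NF J a :=
  fun _ ⟨_, _, hx, hstep, _⟩ => hstep.not_isLetterProduct (hx.isLetterProduct_iff.1 h)

theorem isShift {a : Term} (h : IsLetterProduct a) : IsShift a := by
  induction a with
  | I | pair => exact h.elim
  | L => exact .left
  | R => exact .right
  | comp a b iha ihb => exact .comp (iha h.1) (ihb h.2)

theorem letterTerm : ∀ b : Bool, IsLetterProduct (letterTerm b)
  | false | true => trivial

theorem wordMul {a : Term} (h : IsLetterProduct a) : ∀ w, IsLetterProduct (wordMul w a)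
  | [] => h
  | b :: w => ⟨wordMul (letterTerm b) w, h⟩

end IsLetterProduct

theorem nf_shiftOfWord (J : Set ℕ) : ∀ w, NF J (shiftOfWord w)
  | [] => nf_I J
  | b :: w => ((IsLetterProduct.letterTerm b).wordMul w).nf J

theorem isShift_shiftOfWord : ∀ w, IsShift (shiftOfWord w)
  | [] => .unit
  | b :: w => ((IsLetterProduct.letterTerm b).wordMul w).isShift

theorem nfIsShift_iff_act_ne_none {x : Term} : nfIsShift x ↔ x.act [] ≠ none := by
  constructor
  · rintro ⟨n, hred, -, hn⟩
    rw [Term.act_eq_of_red hred]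
    exact Term.act_ne_none_of_isShift hn []
  · intro h
    obtain ⟨z, hz⟩ := Option.ne_none_iff_exists'.1 h
    exact ⟨shiftOfWord z, red_wordMul_of_act hz, nf_shiftOfWord _ z, isShift_shiftOfWord z⟩

/-- The prefix rewriting system whose steps are the actions of the members of `B` on words. -/
def actionRules (B : List Term) : PrefixSystem Bool := B.flatMap fun t => t.table.1

/-- The words at which the action of some member of `B` is undefined. -/
def stuckWords (B : List Term) : List (List Bool) := B.flatMap fun t => t.table.2

theorem rewrites_actionRules {B : List Term} {w z : List Bool} :
    (actionRules B).Rewrites w z ↔ ∃ t ∈ B, t.act w = some z := by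
  simp only [← (Term.table_describes_act _).1, PrefixSystem.Rewrites, actionRules,
    List.mem_flatMap]
  exact ⟨fun ⟨r, ⟨t, ht, hr⟩, hv⟩ => ⟨t, ht, r, hr, hv⟩,
    fun ⟨t, ht, r, hr, hv⟩ => ⟨r, ⟨t, ht, hr⟩, hv⟩⟩

theorem mem_stuckWords {B : List Term} {w : List Bool} :
    w ∈ stuckWords B ↔ ∃ t ∈ B, t.act w = none := by
  simp only [stuckWords, List.mem_flatMap, (Term.table_describes_act _).2]

theorem exists_act_listProd_eq_none_iff {B : List Term} {w : List Bool} :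
    (∃ l : List Term, (∀ t ∈ l, t ∈ B) ∧ (listProd l).act w = none) ↔
      ∃ z ∈ stuckWords B, (actionRules B).Reaches w z := by
  constructor
  · rintro ⟨l, hl, hw⟩
    induction l generalizing w with
    | nil => exact absurd hw (Option.some_ne_none w)
    | cons t l ih =>
      obtain ⟨ht, hl⟩ := List.forall_mem_cons.1 hl
      rcases hx : t.act w with _ | x
      · exact ⟨w, mem_stuckWords.2 ⟨t, ht, hx⟩, .refl⟩
      · obtain ⟨z, hz, hxz⟩ := ih hl (by simpa [listProd, Term.act, hx] using hw)
        exact ⟨z, hz, hxz.head (rewrites_actionRules.2 ⟨t, ht, hx⟩)⟩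
  · rintro ⟨z, hz, hwz⟩
    induction hwz using Relation.ReflTransGen.head_induction_on with
    | refl =>
      obtain ⟨t, ht, htz⟩ := mem_stuckWords.1 hz
      exact ⟨[t], by simpa using ht, by simp [listProd, Term.act, htz]⟩
    | head hstep _ ih =>
      obtain ⟨t, ht, hx⟩ := rewrites_actionRules.1 hstep
      obtain ⟨l, hl, hxl⟩ := ih
      exact ⟨t :: l, List.forall_mem_cons.2 ⟨ht, hl⟩, by simp [listProd, Term.act, hx, hxl]⟩

theorem badFor_iff {B : List Term} {S : Term} :
    BadFor B S ↔ [] ∉ S.table.2 ∧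
      ¬(actionRules B).CanReach (S.table.1.successors []) (stuckWords B) := by
  have hbad : BadFor B S ↔
      ¬∃ l : List Term, (∀ t ∈ l, t ∈ B) ∧ (S.act []).bind (listProd l).act = none := by
    simp only [BadFor, nfIsShift_iff_act_ne_none, Term.act, not_exists, not_and, ne_eq]
  simp only [hbad, PrefixSystem.CanReach, PrefixSystem.mem_successors,
    S.table_describes_act.1, S.table_describes_act.2]
  cases S.act [] with
  | none => simpa using ⟨[], by simp⟩
  | some w => simp [exists_act_listProd_eq_none_iff]

theorem computablePred_and {α : Type*} [Primcodable α] {p q : α → Prop} (hp : ComputablePred p)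
    (hq : ComputablePred q) : ComputablePred fun a => p a ∧ q a := by
  obtain ⟨f, hf, rfl⟩ := ComputablePred.computable_iff.1 hp
  obtain ⟨g, hg, rfl⟩ := ComputablePred.computable_iff.1 hq
  exact ComputablePred.computable_iff.2 ⟨fun a => f a && g a, Primrec.and.to_comp.comp hf hg,
    by simp only [Bool.and_eq_true]⟩

theorem computablePred_badFor : ComputablePred fun a : List Term × Term => BadFor a.1 a.2 := by
  have htable : Primrec fun a : List Term × Term => a.2.table :=
    Term.primrec_table.comp Primrec.snd
  have hrules : Primrec actionRules :=
    Primrec.list_flatMap Primrec.id (Primrec.fst.comp <| Term.primrec_table.comp Primrec.snd)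
  have hstuck : Primrec stuckWords :=
    Primrec.list_flatMap Primrec.id (Primrec.snd.comp <| Term.primrec_table.comp Primrec.snd)
  have hinstance : Primrec fun a : List Term × Term =>
      (actionRules a.1, a.2.table.1.successors [], stuckWords a.1) :=
    (hrules.comp Primrec.fst).pair <|
      (PrefixSystem.primrec₂_successors.comp (Primrec.fst.comp htable) (Primrec.const [])).pair
        (hstuck.comp Primrec.fst)
  have hundefined : PrimrecPred fun a : List Term × Term => [] ∈ a.2.table.2 :=
    primrecRel_mem.comp (Primrec.const []) (Primrec.snd.comp htable)
  have hreach : ComputablePred fun a : List Term × Term =>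
      (actionRules a.1).CanReach (a.2.table.1.successors []) (stuckWords a.1) :=
    ComputablePred.computable_of_manyOneReducible ⟨_, hinstance.to_comp, fun _ => Iff.rfl⟩
      PrefixSystem.computablePred_canReach
  exact (computablePred_and hundefined.not.computablePred hreach.not).of_eq
    fun _ => badFor_iff.symm

theorem bad_shift_decidable_general :
    ∃ f : ℕ → Bool, Computable f ∧
      ∀ (B : List Term) (S : Term),
        (f (Nat.pair (encodeTermList B) (encodeTerm S)) = true ↔ BadFor B S) := by
  obtain ⟨g, hg, hbad⟩ := ComputablePred.computable_iff.1 computablePred_badFor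
  refine ⟨fun n => ((Encodable.decode n).map g).getD false,
    Computable.option_getD (Computable.option_map Computable.decode (hg.comp Computable.snd).to₂)
      (Computable.const false), fun B S => ?_⟩
  beta_reduce
  rw [← encode_termList, ← encode_term, ← Encodable.encode_prod_val, Encodable.encodek]
  exact (iff_of_eq (congrFun hbad (B, S))).symm

/-- The set of bad shifts is recursive uniformly in `B`: there is an algorithm
deciding, given a finite set `B` of terms in CQ normal form and a shift `S`,
whether `S` is bad for `B`. -/
theorem bad_shift_decidable :
    ∃ f : ℕ → Bool, Computable f ∧
      ∀ (B : List Term) (S : Term), (∀ t ∈ B, NF rules15 t) → IsShift S →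
        (f (Nat.pair (encodeTermList B) (encodeTerm S)) = true ↔ BadFor B S) :=
  let ⟨f, hf, hfB⟩ := bad_shift_decidable_general
  ⟨f, hf, fun B S _ _ => hfB B S⟩
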